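/- arXiv:2604.03789 — 2 statements merged into one kernel-verified Lean document; each statement's English description precedes it below -/
import Mathlib

section
/- A one-dimensional Noetherian local domain is weakly quasi-complete if and only if it is analytically irreducible, that is, its completion with respect to the maximal ideal is an integral domain. -/
/-- A local ring `R` is quasi-complete if for any antitone sequence of ideals
`A : ℕ → Ideal R` and each `k : ℕ`, there exists `s` such that
`A s ≤ (⨅ n, A n) ⊔ (IsLocalRing.maximalIdeal R) ^ k`. -/
def IsQuasiComplete (R : Type*) [CommRing R] [IsLocalRing R] : Prop :=
  ∀ A : ℕ → Ideal R, Antitone A → ∀ k : ℕ, ∃ s,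
    A s ≤ (⨅ n, A n) ⊔ (IsLocalRing.maximalIdeal R) ^ k

/-- A local ring `R` is weakly quasi-complete if the above holds for antitone
sequences with `⨅ n, A n = ⊥`. -/
def IsWeaklyQuasiComplete (R : Type*) [CommRing R] [IsLocalRing R] : Prop :=
  ∀ A : ℕ → Ideal R, Antitone A → (⨅ n, A n) = ⊥ → ∀ k : ℕ, ∃ s,
    A s ≤ (IsLocalRing.maximalIdeal R) ^ k

section WqcHelpers

open IsLocalRing

lemma wqc_regular {R : Type*} [CommRing R] [IsDomain R] [IsNoetherianRing R] (I : Ideal R)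
    {r : R} (hr : r ≠ 0) {y : ℕ → R} (h : ∀ n, r * y n ∈ I ^ n) (k : ℕ) :
    ∃ N, ∀ n ≥ N, y n ∈ I ^ k := by
  obtain ⟨c, hc⟩ := Ideal.exists_pow_inf_eq_pow_smul I (Ideal.span {r} : Submodule R R)
  refine ⟨c + k, fun n hn => ?_⟩
  have h1 : r * y n ∈ I ^ n • (⊤ : Submodule R R) ⊓ Ideal.span {r} :=
    ⟨by simpa using h n, Ideal.mul_mem_right _ _ (Ideal.mem_span_singleton_self r)⟩
  rw [hc n (by omega)] at h1
  have h2 : r * y n ∈ I ^ (n - c) * Ideal.span {r} :=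
    Submodule.smul_mono le_rfl inf_le_right h1
  obtain ⟨z, hz, hz'⟩ := Ideal.mem_mul_span_singleton.1 h2
  have : z = y n := mul_right_cancel₀ hr (by rw [hz', mul_comm])
  exact Ideal.pow_le_pow_right (by omega) (this ▸ hz)

lemma wqc_forward {R : Type*} [CommRing R] [IsDomain R] [IsLocalRing R] [IsNoetherianRing R]
    (H : ∀ A : ℕ → Ideal R, Antitone A → (⨅ n, A n) = ⊥ → ∀ k : ℕ, ∃ s,
      A s ≤ (maximalIdeal R) ^ k) :
    IsDomain (AdicCompletion (maximalIdeal R) R) := by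
  set M := maximalIdeal R
  have hnt : Nontrivial (AdicCompletion M R) := inferInstance
  have hnz : NoZeroDivisors (AdicCompletion M R) := by
    refine ⟨fun {x y} hxy => ?_⟩
    by_contra! hne
    obtain ⟨hx, hy⟩ := hne
    obtain ⟨f, rfl⟩ := AdicCompletion.mk_surjective M R x
    obtain ⟨g, rfl⟩ := AdicCompletion.mk_surjective M R y
    have cauchy : ∀ (f : AdicCompletion.AdicCauchySequence M R) {m n : ℕ}, m ≤ n →
        f n - f m ∈ M ^ m := by
      intro f m n hmn
      have := (AdicCompletion.Ideal.mk_eq_mk (I := M) hmn f)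
      rwa [Ideal.Quotient.eq] at this
    have hfg : ∀ n, f n * g n ∈ M ^ n := by
      intro n
      have := congrArg (AdicCompletion.evalₐ M n) hxy
      rw [map_mul, AdicCompletion.evalₐ_mk, AdicCompletion.evalₐ_mk, map_zero, ← map_mul,
        Ideal.Quotient.eq_zero_iff_mem] at this
      exact this
    apply hx
    have key := H (fun n => Ideal.span {f n} ⊔ M ^ n) ?_ ?_
    · apply AdicCompletion.ext_evalₐ
      intro k
      rw [AdicCompletion.evalₐ_mk, map_zero, Ideal.Quotient.eq_zero_iff_mem]
      obtain ⟨s, hs⟩ := key k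
      have h1 : f s ∈ M ^ k := hs (Ideal.mem_sup_left (Ideal.mem_span_singleton_self _))
      change f k ∈ M ^ k
      rcases le_total s k with h | h
      · have h2 : f k - f s ∈ M ^ k := hs (Ideal.mem_sup_right (cauchy f h))
        simpa using add_mem h2 h1
      · simpa using sub_mem h1 (cauchy f h)
    · intro m n hmn
      refine sup_le ?_ ((Ideal.pow_le_pow_right hmn).trans le_sup_right)
      rw [Ideal.span_singleton_le_iff_mem]
      have : f n = f m + (f n - f m) := by ring
      rw [this]
      exact Submodule.add_mem_sup (Ideal.mem_span_singleton_self _) (cauchy f hmn)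
    · rw [eq_bot_iff]
      intro r hr
      by_contra hr0
      have hr0 : r ≠ 0 := hr0
      have hrg : ∀ n, r * g n ∈ M ^ n := by
        intro n
        have := (Submodule.mem_iInf _).1 hr n
        obtain ⟨u, hu, v, hv, rfl⟩ := Submodule.mem_sup.1 this
        obtain ⟨c, rfl⟩ := Ideal.mem_span_singleton'.1 hu
        have : (c * f n + v) * g n = c * (f n * g n) + g n * v := by ring
        rw [this]
        exact add_mem (Ideal.mul_mem_left _ _ (hfg n)) (Ideal.mul_mem_left _ _ hv)
      apply hy
      apply AdicCompletion.ext_evalₐ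
      intro k
      rw [AdicCompletion.evalₐ_mk, map_zero, Ideal.Quotient.eq_zero_iff_mem]
      change g k ∈ M ^ k
      obtain ⟨N, hN⟩ := wqc_regular M hr0 hrg k
      have h1 := hN (max N k) (le_max_left _ _)
      simpa using sub_mem h1 (cauchy g (le_max_right N k))
  exact NoZeroDivisors.to_isDomain _

lemma wqc_stab {R : Type*} [CommRing R] [IsLocalRing R] [IsNoetherianRing R]
    (A : ℕ → Ideal R) (hA : Antitone A) (j : ℕ) :
    ∃ N, ∀ n, A N ⊔ maximalIdeal R ^ j ≤ A n ⊔ maximalIdeal R ^ j := by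
  rcases Nat.eq_zero_or_pos j with rfl | hj
  · exact ⟨0, fun n => by simp⟩
  have hmin : maximalIdeal R ∈ (maximalIdeal R ^ j).minimalPrimes := by
    refine ⟨⟨inferInstance, Ideal.pow_le_self hj.ne'⟩, fun Q hQ _ => ?_⟩
    have := hQ.1
    exact Ideal.IsPrime.le_of_pow_le hQ.2
  have := IsLocalRing.quotient_artinian_of_mem_minimalPrimes_of_isLocalRing _ hmin
  obtain ⟨N, hN⟩ := IsArtinian.monotone_stabilizes (R := R ⧸ maximalIdeal R ^ j)
    (M := R ⧸ maximalIdeal R ^ j)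
    ⟨fun n => OrderDual.toDual ((A n).map (Ideal.Quotient.mk (maximalIdeal R ^ j))),
      fun m n h => Ideal.map_mono (hA h)⟩
  refine ⟨N, fun n => ?_⟩
  rcases le_total n N with h | h
  · exact sup_le_sup_right (hA h) _
  · have h1 : (A N).map (Ideal.Quotient.mk (maximalIdeal R ^ j)) =
      (A n).map (Ideal.Quotient.mk (maximalIdeal R ^ j)) := hN n h
    have h2 := congrArg (Ideal.comap (Ideal.Quotient.mk (maximalIdeal R ^ j))) h1
    rw [Ideal.comap_map_of_surjective' _ Ideal.Quotient.mk_surjective,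
      Ideal.comap_map_of_surjective' _ Ideal.Quotient.mk_surjective, Ideal.mk_ker] at h2
    exact h2.le

lemma wqc_compact {R : Type*} [CommRing R] [IsLocalRing R] [IsNoetherianRing R]
    (A : ℕ → Ideal R) (hA : Antitone A) (k : ℕ) (hk : ∀ n, ¬ A n ≤ maximalIdeal R ^ k) :
    ∃ x : AdicCompletion (maximalIdeal R) R, x ≠ 0 ∧ ∀ n j, ∃ u ∈ A n ⊔ maximalIdeal R ^ j,
      AdicCompletion.evalₐ (maximalIdeal R) j x = Ideal.Quotient.mk _ u := by
  set M := maximalIdeal R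
  choose N hN using wqc_stab A hA
  let B : ℕ → Ideal R := fun j => A (N j) ⊔ M ^ j
  have step : ∀ j, ∀ u ∈ B j, ∃ v ∈ B (j + 1), u - v ∈ M ^ j := by
    intro j u hu
    obtain ⟨a, ha, m, hm, rfl⟩ := Submodule.mem_sup.1 (hN j (N (j + 1)) hu)
    exact ⟨a, Ideal.mem_sup_left ha, by simpa using hm⟩
  obtain ⟨u0, hu0, hu0'⟩ := SetLike.not_le_iff_exists.1 (hk (N k))
  choose! next hnext hnext' using step
  let w : (i : ℕ) → {u : R // u ∈ B (k + i)} := fun i => Nat.rec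
    ⟨u0, Ideal.mem_sup_left hu0⟩ (fun i u => ⟨next (k + i) u.1, hnext (k + i) u.1 u.2⟩) i
  have hw : ∀ i, (w i).1 - (w (i + 1)).1 ∈ M ^ (k + i) := fun i => hnext' (k + i) (w i).1 (w i).2
  let f : AdicCompletion.AdicCauchySequence M R := AdicCompletion.AdicCauchySequence.mk M R
    (fun i => (w i).1) (fun n => by
      rw [SModEq.sub_mem]
      simpa using Ideal.pow_le_pow_right (by omega) (hw n))
  have hf : ∀ i, f i = (w i).1 := fun i => rfl
  have h0 : ∀ i, (w i).1 - u0 ∈ M ^ k := by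
    intro i
    induction i with
    | zero => simp [w]
    | succ i ih =>
      have := Ideal.pow_le_pow_right (Nat.le_add_right k i) (hw i)
      simpa using sub_mem ih this
  refine ⟨AdicCompletion.mk M R f, ?_, ?_⟩
  · intro h
    have := congrArg (AdicCompletion.evalₐ M k) h
    rw [AdicCompletion.evalₐ_mk, map_zero, Ideal.Quotient.eq_zero_iff_mem] at this
    apply hu0'
    have h3 : (w k).1 ∈ M ^ k := this
    simpa using sub_mem h3 (h0 k)
  · intro n j
    refine ⟨(w j).1, ?_, by rw [AdicCompletion.evalₐ_mk]; rfl⟩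
    have := hN (k + j) n (w j).2
    have h5 : M ^ (k + j) ≤ M ^ j := Ideal.pow_le_pow_right (by omega)
    exact sup_le_sup_left h5 (A n) this

/-- precompleteness for a principal ideal squeezed between powers -/
lemma wqc_precomplete {S : Type*} [CommRing S] (I : Ideal S) [IsAdicComplete I S] (b : S)
    (hb : b ∈ I) (t : ℕ) (ht : I ^ t ≤ Ideal.span {b}) (r : ℕ) :
    IsPrecomplete (Ideal.span {b}) (Fin r → S) := by
  have mem : ∀ (m : ℕ) (v : Fin r → S),
      v ∈ ((Ideal.span {b}) ^ m • ⊤ : Submodule S (Fin r → S)) ↔ ∀ i, b ^ m ∣ v i := by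
    intro m v
    rw [Ideal.span_singleton_pow, Submodule.ideal_span_singleton_smul,
      Submodule.mem_smul_pointwise_iff_exists]
    constructor
    · rintro ⟨u, -, rfl⟩ i
      exact ⟨u i, rfl⟩
    · intro h
      choose u hu using h
      exact ⟨u, trivial, by ext i; simp [hu i]⟩
  refine ⟨fun f hf => ?_⟩
  simp only [SModEq.sub_mem, mem] at hf ⊢
  have hI : ∀ i, ∃ L : S, ∀ n, f n i - L ∈ I ^ n := by
    intro i
    obtain ⟨L, hL⟩ := IsPrecomplete.prec' (I := I) (fun n => f n i) (by
      intro m n hmn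
      rw [SModEq.sub_mem]
      obtain ⟨c, hc⟩ := hf hmn i
      simp only [Pi.sub_apply] at hc
      rw [hc]
      simpa using Ideal.mul_mem_right _ _ (Ideal.pow_mem_pow hb m))
    refine ⟨L, fun n => ?_⟩
    simpa [SModEq.sub_mem] using hL n
  choose L hL using hI
  refine ⟨L, fun n i => ?_⟩
  have h1 : f ((t + 1) * n) i - L i ∈ I ^ ((t + 1) * n) := hL i _
  have h2 : I ^ ((t + 1) * n) ≤ Ideal.span {b ^ n} := by
    rw [← Ideal.span_singleton_pow, pow_mul]
    exact Ideal.pow_right_mono ((Ideal.pow_le_pow_right (Nat.le_succ t)).trans ht) n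
  have h3 := Ideal.mem_span_singleton.1 (h2 h1)
  have h4 := hf (show n ≤ (t + 1) * n by nlinarith) i
  simpa using dvd_add h4 h3

lemma wqc_noeth {S : Type*} [CommRing S] (I : Ideal S) [IsAdicComplete I S] (b : S)
    (hb : b ∈ I) (t : ℕ) (ht : I ^ t ≤ Ideal.span {b})
    [IsNoetherian S (S ⧸ Ideal.span {b})] : IsNoetherianRing S := by
  refine IsNoetherianRing.of_prime fun P hP => ?_
  have hfg : (Submodule.map (Submodule.mkQ (Ideal.span {b})) P).FG := IsNoetherian.noetherian _
  by_cases hbP : b ∈ P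
  · refine Submodule.fg_of_fg_map_of_fg_inf_ker (Submodule.mkQ (Ideal.span {b})) hfg ?_
    rw [Submodule.ker_mkQ, inf_eq_right.2 ((Ideal.span_singleton_le_iff_mem _).2 hbP)]
    exact ⟨{b}, by simp⟩
  · obtain ⟨r, g, hg⟩ := Submodule.fg_iff_exists_fin_generating_family.1 hfg
    have hg' : ∀ i, ∃ p : P, Submodule.mkQ (Ideal.span {b}) (p : S) = g i := by
      intro i
      have : g i ∈ Submodule.map (Submodule.mkQ (Ideal.span {b})) P :=
        hg ▸ Submodule.subset_span ⟨i, rfl⟩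
      obtain ⟨p, hp, h⟩ := this
      exact ⟨⟨p, hp⟩, h⟩
    choose p hp using hg'
    have hpre := wqc_precomplete I b hb t ht r
    have hh : IsHausdorff (Ideal.span {b}) P := by
      refine ⟨fun x hx => ?_⟩
      apply Subtype.ext
      refine IsHausdorff.haus' (I := I) (x : S) fun n => ?_
      have := hx n
      rw [SModEq.sub_mem, sub_zero, Ideal.span_singleton_pow, Submodule.ideal_span_singleton_smul,
      Submodule.mem_smul_pointwise_iff_exists] at this
      obtain ⟨u, -, rfl⟩ := this
      rw [SModEq.sub_mem]
      simpa using Ideal.mul_mem_right _ _ (Ideal.pow_mem_pow hb n)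
    let F : (Fin r → S) →ₗ[S] P := Fintype.linearCombination S p
    have hF : Function.Surjective F := by
      apply surjective_of_mkQ_comp_surjective (I := Ideal.span {b})
      intro y
      obtain ⟨q, rfl⟩ := Submodule.mkQ_surjective _ y
      have hq : Submodule.mkQ (Ideal.span {b}) (q : S) ∈ Submodule.span S (Set.range g) := by
        rw [hg]; exact ⟨q, q.2, rfl⟩
      obtain ⟨c, hc⟩ := (Submodule.mem_span_range_iff_exists_fun S).1 hq
      refine ⟨c, ?_⟩
      rw [LinearMap.comp_apply, ← sub_eq_zero, ← map_sub, Submodule.mkQ_apply,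
        Submodule.Quotient.mk_eq_zero]
      have h1 : ((F c - q : P) : S) ∈ Ideal.span {b} := by
        rw [← Submodule.Quotient.mk_eq_zero, ← Submodule.mkQ_apply]
        simp only [F, Fintype.linearCombination_apply, AddSubgroupClass.coe_sub,
          Submodule.coe_sum, Submodule.coe_smul, map_sub, map_sum, map_smul, hp, hc, sub_self]
      obtain ⟨s, hs⟩ := Ideal.mem_span_singleton.1 h1
      have hsP : s ∈ P := (hP.mem_or_mem (hs ▸ (F c - q : P).2 : b * s ∈ P)).resolve_left hbP
      have : F c - q = b • (⟨s, hsP⟩ : P) := Subtype.ext hs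
      rw [this]
      exact Submodule.smul_mem_smul (Ideal.mem_span_singleton_self b) trivial
    have : Module.Finite S P := Module.Finite.of_surjective F hF
    exact Module.Finite.iff_fg.1 this

lemma wqc_radical {R : Type*} [CommRing R] [IsDomain R] [IsLocalRing R] [IsNoetherianRing R]
    (hdim : ringKrullDim R = 1) [IsDomain (AdicCompletion (maximalIdeal R) R)]
    (a : R) (ha : a ≠ 0) (haM : a ∈ maximalIdeal R) :
    ∀ x : AdicCompletion (maximalIdeal R) R, x ≠ 0 → ∃ m, x ∣ algebraMap R (AdicCompletion (maximalIdeal R) R) (a ^ m) := by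
  set M := maximalIdeal R with hM
  set S := AdicCompletion M R with hS
  have hrad := (ringKrullDim_eq_one_iff_of_isLocalRing_isDomain.1 hdim).2
  obtain ⟨t, ht⟩ := Ideal.exists_pow_le_of_le_radical_of_fg (hrad a ha)
    (IsNoetherian.noetherian _)
  set b := algebraMap R S a with hb
  have hmax : maximalIdeal S = M.map (algebraMap R S) := AdicCompletion.maximalIdeal_eq_map
  have hbm : b ∈ maximalIdeal S := hmax ▸ Ideal.mem_map_of_mem _ haM
  have ht' : maximalIdeal S ^ t ≤ Ideal.span {b} := by
    rw [hmax, ← Ideal.map_pow]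
    refine (Ideal.map_mono ht).trans ?_
    rw [Ideal.map_span, Set.image_singleton]
  have : IsNoetherian R (S ⧸ Ideal.span {b}) := by
    refine isNoetherian_of_surjective (Algebra.linearMap R (S ⧸ Ideal.span {b})) ?_
    rw [LinearMap.range_eq_top]
    intro y
    obtain ⟨y, rfl⟩ := Ideal.Quotient.mk_surjective y
    obtain ⟨r, hr⟩ := Ideal.Quotient.mk_surjective (AdicCompletion.evalₐ M t y)
    refine ⟨r, ?_⟩
    change Ideal.Quotient.mk _ (algebraMap R S r) = _
    rw [Ideal.Quotient.eq]
    apply ht'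
    rw [hmax, ← Ideal.map_pow]
    have h1 : algebraMap R S r - y ∈ (AdicCompletion.eval M R t).ker := by
      have h2 : AdicCompletion.evalₐ M t (algebraMap R S r - y) = 0 := by
        rw [map_sub, ← hr, AlgHom.commutes]
        exact sub_self _
      have h3 := AdicCompletion.factor_evalₐ_eq_eval M (algebraMap R S r - y) (n := t)
        (by simp)
      rw [h2, map_zero] at h3
      exact h3.symm
    rw [← AdicCompletion.pow_smul_top_eq_ker_eval (IsNoetherian.noetherian M),
      Ideal.smul_top_eq_map] at h1
    exact h1
  have : IsNoetherian S (S ⧸ Ideal.span {b}) := isNoetherian_of_tower R this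
  have hNoeth : IsNoetherianRing S := wqc_noeth (maximalIdeal S) b hbm t ht'
  have hmin : maximalIdeal S ∈ (Ideal.span {b}).minimalPrimes := by
    refine ⟨⟨inferInstance, (Ideal.span_singleton_le_iff_mem _).2 hbm⟩, fun Q hQ _ => ?_⟩
    have := hQ.1
    exact Ideal.IsPrime.le_of_pow_le (ht'.trans hQ.2)
  have hht := Ideal.height_le_one_of_isPrincipal_of_mem_minimalPrimes _ _ hmin
  intro x hx
  have hbx : b ∈ (Ideal.span {x}).radical := by
    rw [Ideal.radical_eq_sInf]
    refine Ideal.mem_sInf.2 fun {Q} ⟨hQx, hQ⟩ => ?_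
    by_contra hbQ
    have hlt : Q < maximalIdeal S :=
      lt_of_le_of_ne (le_maximalIdeal hQ.ne_top) (fun h => hbQ (h ▸ hbm))
    have h0 := (Ideal.height_le_iff.1 hht) Q hQ hlt
    have h0 : Q.height = 0 := by simpa using h0
    have hxQ : x ∈ Q := hQx (Ideal.mem_span_singleton_self x)
    have h1 : Q = ⊥ := by simpa using h0
    exact hx (by simpa [h1] using hxQ)
  obtain ⟨m, hm⟩ := hbx
  exact ⟨m, by rw [map_pow]; exact Ideal.mem_span_singleton.1 hm⟩

lemma wqc_backward {R : Type*} [CommRing R] [IsDomain R] [IsLocalRing R] [IsNoetherianRing R]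
    (hdim : ringKrullDim R = 1) [IsDomain (AdicCompletion (maximalIdeal R) R)]
    (A : ℕ → Ideal R) (hA : Antitone A) (h0 : (⨅ n, A n) = ⊥) (k : ℕ) :
    ∃ s, A s ≤ (maximalIdeal R) ^ k := by
  by_contra! hk
  obtain ⟨x, hx, hxA⟩ := wqc_compact A hA k hk
  obtain ⟨hnf, hrad⟩ := ringKrullDim_eq_one_iff_of_isLocalRing_isDomain.1 hdim
  obtain ⟨a, haM, ha⟩ := Submodule.exists_mem_ne_zero_of_ne_bot
    (fun h => hnf (IsLocalRing.isField_iff_maximalIdeal_eq.2 h))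
  obtain ⟨m, s, hs⟩ := wqc_radical hdim a ha haM x hx
  have hmem : a ^ m ∈ ⨅ n, A n := by
    refine (Submodule.mem_iInf _).2 fun n => ?_
    have hAn : A n ≠ ⊥ := fun h => hk n (h ▸ bot_le)
    obtain ⟨c, hcA, hc⟩ := Submodule.exists_mem_ne_zero_of_ne_bot hAn
    obtain ⟨t, ht⟩ := Ideal.exists_pow_le_of_le_radical_of_fg (hrad c hc)
      (IsNoetherian.noetherian _)
    have ht : maximalIdeal R ^ t ≤ A n := ht.trans ((Ideal.span_singleton_le_iff_mem _).2 hcA)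
    obtain ⟨u, hu, hxu⟩ := hxA n t
    rw [sup_eq_left.2 ht] at hu
    obtain ⟨v, hv⟩ := Ideal.Quotient.mk_surjective (AdicCompletion.evalₐ (maximalIdeal R) t s)
    have h1 := congrArg (AdicCompletion.evalₐ (maximalIdeal R) t) hs
    rw [map_mul, hxu, ← hv, AlgHom.commutes, ← map_mul, Ideal.Quotient.algebraMap_eq,
      Ideal.Quotient.eq] at h1
    simpa using add_mem (ht h1) (Ideal.mul_mem_right v _ hu)
  rw [h0] at hmem
  exact pow_ne_zero m ha hmem

end WqcHelpers

/-- A one-dimensional Noetherian local domain is weakly quasi-complete iff it is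
analytically irreducible, i.e. its maximal-adic completion is a domain. -/
theorem dim1_weaklyQuasiComplete_iff_analyticallyIrreducible
    (R : Type*) [CommRing R] [IsDomain R] [IsLocalRing R] [IsNoetherianRing R]
    (hdim : ringKrullDim R = 1) :
    IsWeaklyQuasiComplete R ↔
      IsDomain (AdicCompletion (IsLocalRing.maximalIdeal R) R) := by
  exact ⟨fun H => wqc_forward H, fun _ A hA h0 k => wqc_backward hdim A hA h0 k⟩
end

section
/- There exists a weakly quasi-complete Noetherian local ring that is not quasi-complete. -/
namespace WQC

open Polynomial

noncomputable section

abbrev V : Type := ℤ_[3]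

abbrev CC : Type := Polynomial V

/-- power series whose coefficients below `j` are divisible by `3 ^ m` -/
def GP (m j : ℕ) : Ideal (PowerSeries V) where
  carrier := {f | ∀ i < j, (3 : V) ^ m ∣ PowerSeries.coeff i f}
  add_mem' := by
    intro a b ha hb i hi
    rw [map_add]
    exact dvd_add (ha i hi) (hb i hi)
  zero_mem' := by intro i hi; simp
  smul_mem' := by
    intro c f hf i hi
    rw [smul_eq_mul, PowerSeries.coeff_mul]
    refine Finset.dvd_sum fun x hx => ?_
    have := Finset.HasAntidiagonal.mem_antidiagonal.mp hx
    exact Dvd.dvd.mul_left (hf _ (by omega)) _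

lemma mem_GP {m j : ℕ} {f : PowerSeries V} :
    f ∈ GP m j ↔ ∀ i < j, (3 : V) ^ m ∣ PowerSeries.coeff i f := Iff.rfl

def G (m j : ℕ) : Ideal CC := (GP m j).comap (Polynomial.coeToPowerSeries.ringHom)

lemma mem_G {m j : ℕ} {f : CC} : f ∈ G m j ↔ ∀ i < j, (3 : V) ^ m ∣ f.coeff i := by
  simp [G, mem_GP]

lemma mem_G_iff_GP {m j : ℕ} {f : CC} : f ∈ G m j ↔ (f : PowerSeries V) ∈ GP m j := by
  simp [G]

lemma G_mono {m m' j j' : ℕ} (h : m ≤ m') (h' : j ≤ j') : G m' j' ≤ G m j := by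
  intro f hf
  rw [mem_G] at *
  exact fun i hi => (pow_dvd_pow _ h).trans (hf i (by omega))

def w : CC := X ^ 2 - 4 * X ^ 3 + C 3

lemma prime3 : Prime (3 : V) := by
  exact_mod_cast PadicInt.prime_p (p := 3)

lemma three_ne : (3 : V) ≠ 0 := prime3.ne_zero

lemma val_lemma (m : ℕ) : ∀ a b : V, (3 : V) ^ (2 * m) ∣ a ^ 2 - 3 * b ^ 2 →
    (3 : V) ^ m ∣ a ∧ (3 : V) ^ m ∣ b := by
  induction m with
  | zero => intro a b _; simp
  | succ m ih =>
    intro a b h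
    have h9 : (3 : V) ^ 2 ∣ a ^ 2 - 3 * b ^ 2 := (pow_dvd_pow _ (by omega)).trans h
    have ha : (3 : V) ∣ a := by
      apply prime3.dvd_of_dvd_pow (n := 2)
      obtain ⟨c, hc⟩ := h9
      exact ⟨3 * c + b ^ 2, by linear_combination hc⟩
    obtain ⟨a', rfl⟩ := ha
    have hb : (3 : V) ∣ b := by
      apply prime3.dvd_of_dvd_pow (n := 2)
      obtain ⟨c, hc⟩ := h9
      refine ⟨a' ^ 2 - c, mul_left_cancel₀ three_ne ?_⟩
      linear_combination - hc
    obtain ⟨b', rfl⟩ := hb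
    have := ih a' b' (by
      obtain ⟨c, hc⟩ := h
      refine ⟨c, mul_left_cancel₀ (pow_ne_zero 2 three_ne) ?_⟩
      linear_combination hc)
    rw [pow_succ']
    exact ⟨mul_dvd_mul_left _ this.1, mul_dvd_mul_left _ this.2⟩

lemma C_mem_G {m j : ℕ} {a : V} (h : (3 : V) ^ m ∣ a) : (C a : CC) ∈ G m j := by
  rw [mem_G]
  intro i _
  rw [coeff_C]
  split_ifs
  · exact h
  · simp

lemma norm_lemma (j : ℕ) : ∀ m : ℕ, ∃ M J : ℕ, ∀ a b : CC, a ^ 2 - w * b ^ 2 ∈ G M J →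
    a ∈ G m j ∧ b ∈ G m j := by
  induction j with
  | zero => intro m; exact ⟨0, 0, fun a b _ => ⟨by simp [mem_G], by simp [mem_G]⟩⟩
  | succ j ih =>
    intro m
    obtain ⟨M, J, h⟩ := ih m
    set L := max m M
    refine ⟨2 * L, J + 2, fun a b hab => ?_⟩
    have h0 : (3 : V) ^ (2 * L) ∣ a.coeff 0 ^ 2 - 3 * b.coeff 0 ^ 2 := by
      have := mem_G.mp hab 0 (by omega)
      simp only [coeff_zero_eq_eval_zero] at this ⊢
      simpa [w] using this
    obtain ⟨ha, hb⟩ := val_lemma L _ _ h0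
    obtain ⟨a', ha'⟩ : ∃ a', a = X * a' + C (a.coeff 0) := ⟨_, (X_mul_divX_add a).symm⟩
    obtain ⟨b', hb'⟩ : ∃ b', b = X * b' + C (b.coeff 0) := ⟨_, (X_mul_divX_add b).symm⟩
    set a0 := a.coeff 0
    set b0 := b.coeff 0
    have hA : (C a0 : CC) ∈ G M (J + 2) := C_mem_G ((pow_dvd_pow _ (le_max_right _ _)).trans ha)
    have hB : (C b0 : CC) ∈ G M (J + 2) := C_mem_G ((pow_dvd_pow _ (le_max_right _ _)).trans hb)
    have hX : X ^ 2 * (a' ^ 2 - w * b' ^ 2) ∈ G M (J + 2) := by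
      have e : X ^ 2 * (a' ^ 2 - w * b' ^ 2) = (a ^ 2 - w * b ^ 2)
          - (C a0 + 2 * X * a') * C a0 + w * (C b0 + 2 * X * b') * C b0 := by
        rw [ha', hb']; ring
      rw [e]
      refine Ideal.add_mem _ (Ideal.sub_mem _ (G_mono ?_ le_rfl hab) (Ideal.mul_mem_left _ _ hA))
        (Ideal.mul_mem_left _ _ hB)
      have := le_max_right m M
      omega
    have := h a' b' (by
      rw [mem_G] at hX ⊢
      intro i hi
      have := hX (i + 2) (by omega)
      rwa [coeff_X_pow_mul] at this)
    have fin : ∀ (c c' : CC) (c0 : V), c = X * c' + C c0 → (3 : V) ^ L ∣ c0 → c' ∈ G m j →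
        c ∈ G m (j + 1) := by
      rintro c c' c0 rfl h1 h2
      refine Ideal.add_mem _ ?_ (C_mem_G ((pow_dvd_pow _ (le_max_left _ _)).trans h1))
      rw [mem_G] at h2 ⊢
      intro i hi
      rcases i with _ | i
      · simp
      · rw [coeff_X_mul]; exact h2 i (by omega)
    exact ⟨fin _ _ _ ha' ha this.1, fin _ _ _ hb' hb this.2⟩

lemma weier (b : PowerSeries V) (hb : b ≠ 0) :
    ∃ (u : PowerSeries V) (q : CC), q ≠ 0 ∧ (q : PowerSeries V) = u * b := by
  -- pull out the content
  have key : ∃ (e : ℕ) (g : PowerSeries V), b = PowerSeries.C ((3 : V) ^ e) * g ∧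
      ∃ i, ¬ (3 : V) ∣ PowerSeries.coeff i g := by
    by_contra hcon
    push Not at hcon
    have all : ∀ e : ℕ, ∃ g : PowerSeries V, b = PowerSeries.C ((3 : V) ^ e) * g := by
      intro e
      induction e with
      | zero => exact ⟨b, by simp⟩
      | succ e ih =>
        obtain ⟨g, hg⟩ := ih
        choose c hc using hcon e g hg
        refine ⟨PowerSeries.mk c, ?_⟩
        rw [hg]
        ext i
        simp only [PowerSeries.coeff_C_mul, PowerSeries.coeff_mk, hc i]
        ring
    apply hb
    ext i
    by_contra hne
    have hf : FiniteMultiplicity (3 : V) (PowerSeries.coeff i b) :=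
      FiniteMultiplicity.of_prime_left prime3 hne
    obtain ⟨n, hn⟩ := hf
    obtain ⟨g, hg⟩ := all (n + 1)
    apply hn
    rw [hg, PowerSeries.coeff_C_mul]
    exact dvd_mul_right _ _
  obtain ⟨e, g, rfl, i, hi⟩ := key
  have hres : g.map (IsLocalRing.residue V) ≠ 0 := by
    intro h
    apply hi
    have := congrArg (PowerSeries.coeff i) h
    rw [PowerSeries.coeff_map, map_zero, IsLocalRing.residue_eq_zero_iff,
      PadicInt.maximalIdeal_eq_span_p, Ideal.mem_span_singleton] at this
    exact_mod_cast this
  obtain ⟨f, h, hf⟩ := PowerSeries.exists_isWeierstrassFactorization hres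
  obtain ⟨v, hv⟩ := hf.isUnit.exists_left_inv
  refine ⟨v, C ((3 : V) ^ e) * f, ?_, ?_⟩
  · refine mul_ne_zero ?_ hf.isDistinguishedAt.monic.ne_zero
    rw [Ne, C_eq_zero]
    exact pow_ne_zero _ three_ne
  · rw [hf.eq_mul, Polynomial.coe_mul, Polynomial.coe_C]
    linear_combination (-(PowerSeries.C ((3 : V) ^ e) * (f : PowerSeries V))) * hv

lemma isOpen_dvd (m : ℕ) (c : V) : IsOpen {v : V | (3 : V) ^ m ∣ v - c} := by
  have : {v : V | (3 : V) ^ m ∣ v - c} = Metric.ball c ((3 : ℝ) ^ (-(m : ℤ) + 1)) := by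
    ext v
    have h := PadicInt.norm_le_pow_iff_mem_span_pow (p := 3) (v - c) m
    have h2 := PadicInt.norm_le_pow_iff_norm_lt_pow_add_one (p := 3) (v - c) (-(m : ℤ))
    rw [Ideal.mem_span_singleton] at h
    simp only [Set.mem_ofPred_eq, Metric.mem_ball, dist_eq_norm]
    push_cast at h h2
    rw [← h, h2]
  rw [this]
  exact Metric.isOpen_ball

lemma isOpen_nhd (m j : ℕ) (b : ℕ → V) : IsOpen {g : ℕ → V | ∀ i < j, (3 : V) ^ m ∣ g i - b i} := by
  have : {g : ℕ → V | ∀ i < j, (3 : V) ^ m ∣ g i - b i} =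
      ⋂ i ∈ Set.Iio j, (fun g : ℕ → V => g i) ⁻¹' {v : V | (3 : V) ^ m ∣ v - b i} := by
    ext g; simp
  rw [this]
  exact (Set.finite_Iio j).isOpen_biInter fun i _ => (isOpen_dvd m (b i)).preimage (continuous_apply i)

lemma chevalley (D : ℕ → Ideal CC) (hD : Antitone D) (M J : ℕ)
    (hcl : ∀ n c, (∀ j, ∃ f ∈ D n, c - f ∈ G j j) → c ∈ D n)
    (hbot : ∀ c, (∀ n, c ∈ D n) → c = 0) : ∃ n, D n ≤ G M J := by
  by_contra hcon
  push Not at hcon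
  let S : ℕ → Set (ℕ → V) := fun n => (fun f : CC => f.coeff) '' (D n : Set CC)
  let U : Set (ℕ → V) := {g | ∀ i < J, (3 : V) ^ M ∣ g i - 0}
  have hU : IsOpen U := isOpen_nhd M J (fun _ => 0)
  obtain ⟨b, hb⟩ : (⋂ n, closure (S n) ∩ Uᶜ).Nonempty := by
    apply IsCompact.nonempty_iInter_of_sequence_nonempty_isCompact_isClosed
    · intro n
      exact Set.inter_subset_inter_left _ (closure_mono (Set.image_mono (hD (Nat.le_succ n))))
    · intro n
      obtain ⟨f, hf, hf'⟩ := Set.not_subset.mp (hcon n)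
      refine ⟨f.coeff, subset_closure ⟨f, hf, rfl⟩, fun h => hf' ?_⟩
      rw [SetLike.mem_coe, mem_G]
      simpa [U] using h
    · exact (isClosed_closure.inter hU.isClosed_compl).isCompact
    · intro n
      exact isClosed_closure.inter hU.isClosed_compl
  rw [Set.mem_iInter] at hb
  have hb0 : PowerSeries.mk b ≠ 0 := by
    intro h
    apply (hb 0).2
    intro i hi
    have := congrArg (PowerSeries.coeff i) h
    rw [PowerSeries.coeff_mk, map_zero] at this
    simp [this]
  obtain ⟨u, q, hq, hqu⟩ := weier _ hb0
  refine hq (hbot q fun n => hcl n q fun j => ?_)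
  obtain ⟨g, hg, f, hf, rfl⟩ := mem_closure_iff.mp (hb n).1 _ (isOpen_nhd j j b) (by simp)
  refine ⟨u.trunc j * f, Ideal.mul_mem_left _ _ hf, ?_⟩
  rw [mem_G_iff_GP]
  have h1 : (f : PowerSeries V) - PowerSeries.mk b ∈ GP j j := by
    intro i hi
    simpa using hg i hi
  have h2 : (u.trunc j : PowerSeries V) - u ∈ GP j j := by
    intro i hi
    simp [PowerSeries.coeff_trunc, hi]
  have e : ((q - u.trunc j * f : CC) : PowerSeries V) =
      - ((u.trunc j : PowerSeries V) * ((f : PowerSeries V) - PowerSeries.mk b)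
        + PowerSeries.mk b * ((u.trunc j : PowerSeries V) - u)) := by
    rw [Polynomial.coe_sub, Polynomial.coe_mul, hqu]; ring
  rw [e]
  exact neg_mem (Ideal.add_mem _ (Ideal.mul_mem_left _ _ h1) (Ideal.mul_mem_left _ _ h2))

lemma G_le {k : ℕ} {f : CC} (hf : f ∈ G k k) : ∃ a b : CC, f = C 3 ^ k * a + X ^ k * b := by
  have h1 : (C (3 : V)) ^ k ∣ ((f : PowerSeries V).trunc k) := by
    rw [← C_pow, C_dvd_iff_dvd_coeff]
    intro i
    rw [PowerSeries.coeff_trunc]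
    split_ifs with h
    · simpa using mem_G.mp hf i h
    · simp
  have h2 : (X : CC) ^ k ∣ f - ((f : PowerSeries V).trunc k) := by
    rw [X_pow_dvd_iff]
    intro d hd
    simp [PowerSeries.coeff_trunc, hd]
  obtain ⟨a, ha⟩ := h1
  obtain ⟨b, hb⟩ := h2
  exact ⟨a, b, by rw [← ha, ← hb]; ring⟩

abbrev k3 : Type := ZMod 3

abbrev BB : Type := QuadraticAlgebra CC w 0

instance : IsNoetherianRing BB := IsNoetherianRing.of_finite CC BB

def liftHom {A : Type} [CommRing A] (f : CC →+* A) (u : A) (h : u * u = f w) : BB →+* A where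
  toFun z := f z.re + f z.im * u
  map_one' := by
    change f 1 + f 0 * u = 1
    simp
  map_zero' := by simp
  map_add' := by intro x y; simp; ring
  map_mul' := by
    intro x y
    simp only [QuadraticAlgebra.re_mul, QuadraticAlgebra.im_mul, map_add, map_mul, map_zero]
    linear_combination (-(f x.im * f y.im)) * h

def red : V →+* k3 := PadicInt.toZMod

lemma red_three : red 3 = 0 := by
  rw [show (3 : V) = ((3 : ℕ) : V) by norm_num, map_natCast]
  rfl

def cat : PowerSeries ℕ := PowerSeries.catalanSeries

/-- `X * sqrt (1 - 4 X)` -/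
def rt (A : Type) [CommRing A] : PowerSeries A :=
  PowerSeries.X * (1 - 2 * PowerSeries.X * cat.map (Nat.castRingHom A))

lemma rt_sq (A : Type) [CommRing A] :
    rt A * rt A = PowerSeries.X ^ 2 - 4 * PowerSeries.X ^ 3 := by
  have h := congrArg (PowerSeries.map (Nat.castRingHom A)) PowerSeries.catalanSeries_sq_mul_X_add_one
  simp only [map_add, map_mul, map_pow, PowerSeries.map_X, map_one] at h
  unfold rt cat
  linear_combination (4 * PowerSeries.X ^ 3) * h

def toK : CC →+* PowerSeries k3 :=
  (Polynomial.coeToPowerSeries.ringHom).comp (mapRingHom red)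

lemma toK_apply (f : CC) : toK f = ((f.map red : Polynomial k3) : PowerSeries k3) := rfl

lemma w_map : w.map red = X ^ 2 - 4 * X ^ 3 := by
  simp [w, red_three]

lemma coe4 : ((4 : Polynomial k3) : PowerSeries k3) = 4 :=
  map_ofNat (Polynomial.coeToPowerSeries.ringHom (R := k3)) 4

def phi : BB →+* PowerSeries k3 := liftHom toK (rt k3) (by
  rw [rt_sq, toK_apply, w_map]
  push_cast
  rw [coe4])

lemma phi_apply (z : BB) : phi z = toK z.re + toK z.im * rt k3 := rfl

def MM : Ideal BB := RingHom.ker ((PowerSeries.constantCoeff (R := k3)).comp phi)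

instance : MM.IsPrime := RingHom.ker_isPrime _

lemma mem_MM {z : BB} : z ∈ MM ↔ red (z.re.coeff 0) = 0 := by
  rw [MM, RingHom.mem_ker, RingHom.comp_apply, phi_apply, toK_apply, toK_apply]
  have h : PowerSeries.constantCoeff ((z.re.map red : Polynomial k3) : PowerSeries k3)
      = red (z.re.coeff 0) := by
    rw [← PowerSeries.coeff_zero_eq_constantCoeff_apply, Polynomial.coeff_coe, coeff_map]
  rw [map_add, h]
  simp [rt]

lemma constantCoeff_phi {z : BB} : PowerSeries.constantCoeff (phi z) = 0 ↔ z ∈ MM := Iff.rfl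

abbrev RR : Type := Localization.AtPrime MM

def io : CC →+* RR := (algebraMap BB RR).comp (algebraMap CC BB)

lemma io_inj {c : CC} (h : io c = 0) : c = 0 := by
  rw [io, RingHom.comp_apply, IsLocalization.map_eq_zero_iff MM.primeCompl] at h
  obtain ⟨⟨s, hs⟩, h⟩ := h
  by_contra hc
  apply hs
  have h1 := congrArg QuadraticAlgebra.re h
  simp [hc] at h1
  rw [SetLike.mem_coe, mem_MM, h1]
  simp

lemma G_pow {k : ℕ} {f : CC} (hf : f ∈ G k k) : algebraMap CC BB f ∈ MM ^ k := by
  obtain ⟨a, b, rfl⟩ := G_le hf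
  simp only [map_add, map_mul, map_pow]
  refine Ideal.add_mem _ (Ideal.mul_mem_right _ _ (Ideal.pow_mem_pow ?_ _))
    (Ideal.mul_mem_right _ _ (Ideal.pow_mem_pow ?_ _))
  · rw [mem_MM]; simp [red_three]
  · rw [mem_MM]; simp

lemma map_pow_mem {k : ℕ} {b : BB} (hb : b ∈ MM ^ k) :
    algebraMap BB RR b ∈ IsLocalRing.maximalIdeal RR ^ k := by
  have h : MM.map (algebraMap BB RR) ≤ IsLocalRing.maximalIdeal RR := by
    rw [Ideal.map_le_iff_le_comap]
    intro x hx
    exact (IsLocalization.AtPrime.to_map_mem_maximal_iff RR MM x).mpr hx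
  have := Ideal.mem_map_of_mem (algebraMap BB RR) hb
  rw [Ideal.map_pow] at this
  exact Ideal.pow_right_mono h k this

lemma io_pow {k : ℕ} {f : CC} (hf : f ∈ G k k) : io f ∈ IsLocalRing.maximalIdeal RR ^ k :=
  map_pow_mem (G_pow hf)

lemma closed (A : Ideal RR) (x : RR)
    (h : ∀ j, ∃ f ∈ A, x - f ∈ IsLocalRing.maximalIdeal RR ^ j) : x ∈ A := by
  rw [← Ideal.Quotient.eq_zero_iff_mem]
  apply IsHausdorff.haus (I := IsLocalRing.maximalIdeal RR) inferInstance
  intro j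
  rw [SModEq.zero]
  obtain ⟨f, hf, hx⟩ := h j
  have e : Ideal.Quotient.mk A x = (x - f) • (1 : RR ⧸ A) := by
    change _ = Ideal.Quotient.mk A ((x - f) * 1)
    rw [mul_one, map_sub, Ideal.Quotient.eq_zero_iff_mem.mpr hf, sub_zero]
  rw [e]
  exact Submodule.smul_mem_smul hx trivial

lemma weak : IsWeaklyQuasiComplete RR := by
  intro A hA hbot k
  obtain ⟨M, J, hN⟩ := norm_lemma k k
  obtain ⟨n, hn⟩ := chevalley (fun n => (A n).comap io) (fun a b h => Ideal.comap_mono (hA h)) M J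
    (by
      intro n c h
      refine closed (A n) (io c) fun j => ?_
      obtain ⟨f, hf, hc⟩ := h j
      exact ⟨io f, hf, by rw [← map_sub]; exact io_pow hc⟩)
    (by
      intro c hc
      apply io_inj
      rw [← Ideal.mem_bot, ← hbot, Ideal.mem_iInf]
      exact hc)
  refine ⟨n, fun r hr => ?_⟩
  obtain ⟨b, s, rfl⟩ := IsLocalization.exists_mk'_eq MM.primeCompl r
  have hb : algebraMap BB RR b ∈ A n := by
    rw [← IsLocalization.mk'_spec' RR b s]
    exact Ideal.mul_mem_left _ _ hr
  have hnorm : b.norm ∈ G M J := by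
    apply hn
    change algebraMap BB RR (algebraMap CC BB b.norm) ∈ A n
    rw [QuadraticAlgebra.algebraMap_norm_eq_mul_star, map_mul]
    exact Ideal.mul_mem_right _ _ hb
  have e : b.norm = b.re ^ 2 - w * b.im ^ 2 := by
    rw [QuadraticAlgebra.norm_def]; ring
  rw [e] at hnorm
  obtain ⟨h1, h2⟩ := hN _ _ hnorm
  have hbM : b ∈ MM ^ k := by
    have : b = algebraMap CC BB b.re + algebraMap CC BB b.im * QuadraticAlgebra.omega := by
      ext <;> simp
    rw [this]
    exact Ideal.add_mem _ (G_pow h1) (Ideal.mul_mem_right _ _ (G_pow h2))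
  rw [IsLocalization.mk'_eq_mul_mk'_one]
  exact Ideal.mul_mem_right _ _ (map_pow_mem hbM)

/-! ### failure of quasi-completeness -/

def toD : CC →+* DualNumber k3 :=
  (TrivSqZeroExt.inlHom k3 k3).comp ((Polynomial.constantCoeff).comp (mapRingHom red))

lemma toD_apply (f : CC) : toD f = TrivSqZeroExt.inlHom k3 k3 (red (f.coeff 0)) := by
  simp [toD]

def psi : BB →+* DualNumber k3 := liftHom toD DualNumber.eps (by
  rw [toD_apply, DualNumber.eps_mul_eps]
  simp [w, red_three])

lemma psi_apply (z : BB) : psi z = toD z.re + toD z.im * DualNumber.eps := rfl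

def phiR : RR →+* PowerSeries k3 := IsLocalization.lift (M := MM.primeCompl) (g := phi) (by
  rintro ⟨s, hs⟩
  rw [PowerSeries.isUnit_iff_constantCoeff, isUnit_iff_ne_zero]
  exact hs)

def psiR : RR →+* DualNumber k3 := IsLocalization.lift (M := MM.primeCompl) (g := psi) (by
  rintro ⟨s, hs⟩
  rw [TrivSqZeroExt.isUnit_iff_isUnit_fst, isUnit_iff_ne_zero]
  intro h
  apply hs
  rw [SetLike.mem_coe, mem_MM]
  simpa [psi_apply, toD_apply] using h)

lemma phiR_alg (b : BB) : phiR (algebraMap BB RR b) = phi b := IsLocalization.lift_eq _ _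
lemma psiR_alg (b : BB) : psiR (algebraMap BB RR b) = psi b := IsLocalization.lift_eq _ _

lemma poly_lemma (a c : Polynomial k3) (h : a ^ 2 = c ^ 2 * (X ^ 2 - 4 * X ^ 3)) : a = 0 ∧ c = 0 := by
  have hd : (X ^ 2 - 4 * X ^ 3 : Polynomial k3).natDegree = 3 := by
    have : (4 : Polynomial k3) = C 1 := by
      rw [show (4 : Polynomial k3) = C 4 from rfl]; rfl
    rw [this]
    compute_degree!
  have hc : c = 0 := by
    by_contra hc
    have h0 : (X ^ 2 - 4 * X ^ 3 : Polynomial k3) ≠ 0 := by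
      intro h; rw [h] at hd; simp at hd
    have := congrArg natDegree h
    rw [natDegree_pow, natDegree_mul (pow_ne_zero _ hc) h0, natDegree_pow, hd] at this
    omega
  subst hc
  refine ⟨?_, rfl⟩
  simpa using h

lemma ker_phi {b : BB} (h : phi b = 0) : psi b = 0 := by
  rw [phi_apply, toK_apply, toK_apply] at h
  obtain ⟨h1, h2⟩ := poly_lemma (b.re.map red) (b.im.map red) (by
    apply Polynomial.coe_injective
    have := rt_sq k3
    push_cast
    rw [coe4, ← this]
    linear_combination ((b.re.map red : Polynomial k3) - (b.im.map red : Polynomial k3) * rt k3 :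
      PowerSeries k3) * h)
  have e1 := congrArg (fun p => Polynomial.coeff p 0) h1
  have e2 := congrArg (fun p => Polynomial.coeff p 0) h2
  simp only [coeff_map, coeff_zero] at e1 e2
  rw [psi_apply, toD_apply, toD_apply, e1, e2]
  simp

lemma ker_phiR {r : RR} (h : phiR r = 0) : psiR r = 0 := by
  obtain ⟨b, s, rfl⟩ := IsLocalization.exists_mk'_eq MM.primeCompl r
  have hb : phi b = 0 := by
    rw [← phiR_alg, ← IsLocalization.mk'_spec' RR b s, map_mul, h, mul_zero]
  rw [IsLocalization.mk'_eq_mul_mk'_one, map_mul, psiR_alg, ker_phi hb, zero_mul]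

lemma psiR_max {r : RR} (h : r ∈ IsLocalRing.maximalIdeal RR) : TrivSqZeroExt.fst (psiR r) = 0 := by
  obtain ⟨b, s, rfl⟩ := IsLocalization.exists_mk'_eq MM.primeCompl r
  have hb : b ∈ MM := by
    rw [← IsLocalization.AtPrime.to_map_mem_maximal_iff RR MM,
      ← IsLocalization.mk'_spec' RR b s]
    exact Ideal.mul_mem_left _ _ h
  rw [IsLocalization.mk'_eq_mul_mk'_one, map_mul, psiR_alg, TrivSqZeroExt.fst_mul]
  rw [mem_MM] at hb
  simp [psi_apply, toD_apply, hb]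

lemma max_sq_le : IsLocalRing.maximalIdeal RR ^ 2 ≤ RingHom.ker psiR := by
  rw [pow_two, Ideal.mul_le]
  intro r hr s hs
  rw [RingHom.mem_ker, map_mul]
  ext
  · simp [psiR_max hr]
  · simp [psiR_max hr, psiR_max hs]

lemma not_qc : ¬ IsQuasiComplete RR := by
  intro hq
  let A : ℕ → Ideal RR := fun n => (Ideal.span {(PowerSeries.X : PowerSeries k3) ^ n}).comap phiR
  have memA : ∀ n r, r ∈ A n ↔ (PowerSeries.X : PowerSeries k3) ^ n ∣ phiR r := fun n r => by
    simp only [A, Ideal.mem_comap, Ideal.mem_span_singleton]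
  have hA : Antitone A := by
    intro m n h r hr
    rw [memA] at *
    exact (pow_dvd_pow _ h).trans hr
  obtain ⟨s, hs⟩ := hq A hA 2
  have hle : (⨅ n, A n) ⊔ IsLocalRing.maximalIdeal RR ^ 2 ≤ RingHom.ker psiR := by
    refine sup_le ?_ max_sq_le
    intro r hr
    apply ker_phiR
    rw [Ideal.mem_iInf] at hr
    ext i
    have := (memA _ _).mp (hr (i + 1))
    rw [PowerSeries.X_pow_dvd_iff] at this
    simpa using this i (by omega)
  let P : CC := (rt V).trunc s
  let t : BB := ⟨-P, 1⟩
  have ht : algebraMap BB RR t ∈ A s := by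
    rw [memA, phiR_alg, phi_apply, PowerSeries.X_pow_dvd_iff]
    intro m hm
    have hrt : rt k3 = (rt V).map red := by
      unfold rt
      simp only [map_mul, map_sub, map_one, PowerSeries.map_X, map_ofNat]
      congr 3
      ext i
      simp
    simp only [t, P, map_neg, map_one, one_mul, toK_apply, hrt]
    simp [PowerSeries.coeff_trunc, hm]
  have h := hle (hs ht)
  rw [RingHom.mem_ker, psiR_alg, psi_apply] at h
  have := congrArg TrivSqZeroExt.snd h
  simp [t, toD_apply] at this

end

end WQC

/-- There exists a weakly quasi-complete Noetherian local ring that is not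
quasi-complete. -/
theorem exists_weaklyQuasiComplete_not_quasiComplete :
    ∃ (R : Type) (_ : CommRing R) (_ : IsLocalRing R) (_ : IsNoetherianRing R),
      IsWeaklyQuasiComplete R ∧ ¬ IsQuasiComplete R :=
  ⟨WQC.RR, inferInstance, inferInstance, inferInstance, WQC.weak, WQC.not_qc⟩
end
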